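/- Let e be a unit vector of the 9-dimensional Euclidean space ℝ⁹ and let p be a real number with 0 ≤ p < 6. Then the function z ↦ ‖z − e‖^{−7} · ‖z‖^{p−8} is Lebesgue-integrable on ℝ⁹, and (3 Γ(7/2) / (2 π^{9/2})) · ∫_{ℝ⁹} ‖z − e‖^{−7} ‖z‖^{p−8} dz = (6/7) · ( 1/(p+1) + 1/(6−p) ). -/

import Mathlib

open MeasureTheory

/-!
Both factors are Riesz kernels, and the integral is an instance of the Riesz composition formula,
valid in every dimension `d` and obtained by Feynman's parametrisation: the product
`‖z - x‖ ^ (-2a) * ‖z - y‖ ^ (-2b)` is an integral over `w > 0` of powers of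
`‖z - x‖² + w ‖z - y‖²`. Completing the square turns the `z`-integral into a radial one, evaluated
by writing the power as a Gamma integral of Gaussians, and what remains is a Beta integral in `w`.
For the Newtonian exponent `2a = d - 2` the Gamma factors collapse to a rational function. All
exchanges of integrals are for nonnegative functions, so integrability comes with the value.
-/

section

open Real Set Module ProbabilityTheory

section

variable {α : Type*} [MeasurableSpace α] {μ : Measure α} {f : α → ℝ}

lemma lintegral_ofReal_const_mul_eq_iff {k c : ℝ} (hk : 0 < k) :
    ∫⁻ x, ENNReal.ofReal (k * f x) ∂μ = ENNReal.ofReal (k * c) ↔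
      ∫⁻ x, ENNReal.ofReal (f x) ∂μ = ENNReal.ofReal c := by
  simp_rw [ENNReal.ofReal_mul hk.le]
  rw [lintegral_const_mul' _ _ ENNReal.ofReal_ne_top,
    ENNReal.mul_right_inj (ENNReal.ofReal_pos.2 hk).ne' ENNReal.ofReal_ne_top]

lemma lintegral_ofReal_eq_of_integral_pos (hf : 0 ≤ᵐ[μ] f) (hpos : 0 < ∫ x, f x ∂μ) :
    ∫⁻ x, ENNReal.ofReal (f x) ∂μ = ENNReal.ofReal (∫ x, f x ∂μ) :=
  (ofReal_integral_eq_lintegral_ofReal (.of_integral_ne_zero hpos.ne') hf).symm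

lemma integrable_and_integral_eq_of_lintegral_ofReal_eq {c : ℝ}
    (hfm : AEStronglyMeasurable f μ) (hf : 0 ≤ᵐ[μ] f) (hc : 0 ≤ c)
    (h : ∫⁻ x, ENNReal.ofReal (f x) ∂μ = ENNReal.ofReal c) :
    Integrable f μ ∧ ∫ x, f x ∂μ = c := by
  refine ⟨⟨hfm, ?_⟩, ?_⟩
  · rw [hasFiniteIntegral_iff_ofReal hf, h]
    exact ENNReal.ofReal_lt_top
  · rw [integral_eq_lintegral_of_nonneg_ae hf hfm, h, ENNReal.toReal_ofReal hc]

end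

lemma lintegral_rpow_mul_exp_neg_mul_Ioi {a r : ℝ} (ha : 0 < a) (hr : 0 < r) :
    ∫⁻ t in Ioi (0 : ℝ), ENNReal.ofReal (t ^ (a - 1) * exp (-(r * t))) =
      ENNReal.ofReal (Gamma a * r ^ (-a)) := by
  have hval : ∫ t in Ioi (0 : ℝ), t ^ (a - 1) * exp (-(r * t)) = Gamma a * r ^ (-a) := by
    rw [integral_rpow_mul_exp_neg_mul_Ioi ha hr, one_div, inv_rpow hr.le, rpow_neg hr.le, mul_comm]
  rw [← hval]
  refine lintegral_ofReal_eq_of_integral_pos ?_ (by rw [hval]; positivity)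
  filter_upwards [ae_restrict_mem measurableSet_Ioi] with t (ht : 0 < t)
  exact mul_nonneg (rpow_nonneg ht.le _) (exp_pos _).le

/-- Feynman's parametrisation of the product `r ^ (-a) * s ^ (-b)`. -/
lemma lintegral_rpow_mul_add_mul_rpow_Ioi {a b r s : ℝ} (ha : 0 < a) (hb : 0 < b) (hr : 0 < r)
    (hs : 0 < s) :
    ∫⁻ w in Ioi (0 : ℝ), ENNReal.ofReal (w ^ (b - 1) * (r + w * s) ^ (-(a + b))) =
      ENNReal.ofReal (beta a b * (r ^ (-a) * s ^ (-b))) := by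
  have hΓab := Gamma_pos_of_pos (add_pos ha hb)
  rw [← lintegral_ofReal_const_mul_eq_iff hΓab]
  calc ∫⁻ w in Ioi (0 : ℝ), ENNReal.ofReal
        (Gamma (a + b) * (w ^ (b - 1) * (r + w * s) ^ (-(a + b))))
      = ∫⁻ w in Ioi (0 : ℝ), ∫⁻ t in Ioi (0 : ℝ), ENNReal.ofReal
          (w ^ (b - 1) * (t ^ (a + b - 1) * exp (-((r + w * s) * t)))) := by
        refine setLIntegral_congr_fun measurableSet_Ioi fun w (hw : 0 < w) => ?_
        rw [(lintegral_ofReal_const_mul_eq_iff (rpow_pos_of_pos hw _)).2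
          (lintegral_rpow_mul_exp_neg_mul_Ioi (add_pos ha hb) (by positivity)), mul_left_comm]
    _ = ∫⁻ t in Ioi (0 : ℝ), ∫⁻ w in Ioi (0 : ℝ), ENNReal.ofReal
          (w ^ (b - 1) * (t ^ (a + b - 1) * exp (-((r + w * s) * t)))) :=
        lintegral_lintegral_swap (by fun_prop)
    _ = ∫⁻ t in Ioi (0 : ℝ), ENNReal.ofReal
          (Gamma b * s ^ (-b) * (t ^ (a - 1) * exp (-(r * t)))) := by
        refine setLIntegral_congr_fun measurableSet_Ioi fun t (ht : 0 < t) => ?_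
        have hsplit : ∀ w : ℝ, w ^ (b - 1) * (t ^ (a + b - 1) * exp (-((r + w * s) * t))) =
            t ^ (a + b - 1) * exp (-(r * t)) * (w ^ (b - 1) * exp (-(s * t * w))) := fun w => by
          rw [show -((r + w * s) * t) = -(r * t) + -(s * t * w) by ring, exp_add]
          ring
        simp_rw [hsplit]
        rw [(lintegral_ofReal_const_mul_eq_iff (by positivity)).2
          (lintegral_rpow_mul_exp_neg_mul_Ioi hb (mul_pos hs ht)), mul_rpow hs.le ht.le,
          show a - 1 = a + b - 1 + -b by ring, rpow_add ht (a + b - 1)]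
        ring_nf
    _ = ENNReal.ofReal (Gamma b * s ^ (-b) * (Gamma a * r ^ (-a))) :=
        (lintegral_ofReal_const_mul_eq_iff (by positivity)).2
          (lintegral_rpow_mul_exp_neg_mul_Ioi ha hr)
    _ = ENNReal.ofReal (Gamma (a + b) * (beta a b * (r ^ (-a) * s ^ (-b)))) := by
        rw [beta]
        field_simp

lemma lintegral_rpow_mul_one_add_rpow_Ioi {a b : ℝ} (ha : 0 < a) (hb : 0 < b) :
    ∫⁻ w in Ioi (0 : ℝ), ENNReal.ofReal (w ^ (b - 1) * (1 + w) ^ (-(a + b))) =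
      ENNReal.ofReal (beta a b) := by
  simpa using lintegral_rpow_mul_add_mul_rpow_Ioi ha hb one_pos one_pos

variable {V : Type*} [NormedAddCommGroup V] [InnerProductSpace ℝ V]

lemma mul_sq_norm_sub_add_mul_sq_norm_sub {s t : ℝ} (hst : s + t ≠ 0) (x y z : V) :
    s * ‖z - x‖ ^ 2 + t * ‖z - y‖ ^ 2 =
      (s + t) * ‖z - (s + t)⁻¹ • (s • x + t • y)‖ ^ 2 + s * t / (s + t) * ‖x - y‖ ^ 2 := by
  simp only [norm_sub_sq_real, inner_smul_right, inner_add_right, norm_smul, mul_pow, norm_eq_abs,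
    sq_abs, norm_add_sq_real, real_inner_smul_left]
  field_simp
  ring

variable [FiniteDimensional ℝ V] [MeasurableSpace V] [BorelSpace V]

lemma lintegral_exp_neg_mul_sq_norm {b : ℝ} (hb : 0 < b) :
    ∫⁻ z : V, ENNReal.ofReal (exp (-b * ‖z‖ ^ 2)) =
      ENNReal.ofReal ((π / b) ^ (finrank ℝ V / 2 : ℝ)) := by
  have hval := GaussianFourier.integral_rexp_neg_mul_sq_norm (V := V) hb
  rw [← hval]
  exact lintegral_ofReal_eq_of_integral_pos (ae_of_all _ fun z => (exp_pos _).le)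
    (by rw [hval]; positivity)

lemma lintegral_mul_sq_norm_add_rpow {A B c : ℝ} (hA : 0 < A) (hB : 0 < B)
    (hc : (finrank ℝ V / 2 : ℝ) < c) :
    ∫⁻ z : V, ENNReal.ofReal ((A * ‖z‖ ^ 2 + B) ^ (-c)) =
      ENNReal.ofReal (π ^ (finrank ℝ V / 2 : ℝ) * Gamma (c - finrank ℝ V / 2) / Gamma c *
        (A ^ (-(finrank ℝ V / 2 : ℝ)) * B ^ (finrank ℝ V / 2 - c))) := by
  set n : ℝ := finrank ℝ V / 2 with hn
  have hc0 : 0 < c := lt_of_le_of_lt (by positivity) hc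
  have hΓc := Gamma_pos_of_pos hc0
  rw [← lintegral_ofReal_const_mul_eq_iff hΓc]
  calc ∫⁻ z : V, ENNReal.ofReal (Gamma c * (A * ‖z‖ ^ 2 + B) ^ (-c))
      = ∫⁻ z : V, ∫⁻ t in Ioi (0 : ℝ), ENNReal.ofReal
          (t ^ (c - 1) * exp (-((A * ‖z‖ ^ 2 + B) * t))) :=
        lintegral_congr fun z => (lintegral_rpow_mul_exp_neg_mul_Ioi hc0 (by positivity)).symm
    _ = ∫⁻ t in Ioi (0 : ℝ), ∫⁻ z : V, ENNReal.ofReal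
          (t ^ (c - 1) * exp (-((A * ‖z‖ ^ 2 + B) * t))) :=
        lintegral_lintegral_swap (by fun_prop)
    _ = ∫⁻ t in Ioi (0 : ℝ), ENNReal.ofReal
          (π ^ n * A ^ (-n) * (t ^ (c - n - 1) * exp (-(B * t)))) := by
        refine setLIntegral_congr_fun measurableSet_Ioi fun t (ht : 0 < t) => ?_
        have hsplit : ∀ z : V, t ^ (c - 1) * exp (-((A * ‖z‖ ^ 2 + B) * t)) =
            t ^ (c - 1) * exp (-(B * t)) * exp (-(A * t) * ‖z‖ ^ 2) := fun z => by
          rw [mul_assoc, ← exp_add]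
          ring_nf
        simp_rw [hsplit]
        rw [(lintegral_ofReal_const_mul_eq_iff (by positivity)).2
          (lintegral_exp_neg_mul_sq_norm (mul_pos hA ht)), ← hn, div_rpow pi_pos.le (by positivity),
          mul_rpow hA.le ht.le, show c - n - 1 = c - 1 - n by ring, rpow_sub ht (c - 1),
          rpow_neg hA.le]
        field_simp
    _ = ENNReal.ofReal (π ^ n * A ^ (-n) * (Gamma (c - n) * B ^ (-(c - n)))) :=
        (lintegral_ofReal_const_mul_eq_iff (by positivity)).2
          (lintegral_rpow_mul_exp_neg_mul_Ioi (sub_pos.2 hc) hB)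
    _ = ENNReal.ofReal
          (Gamma c * (π ^ n * Gamma (c - n) / Gamma c * (A ^ (-n) * B ^ (n - c)))) := by
        rw [neg_sub]
        field_simp

lemma lintegral_mul_sq_norm_sub_add_mul_sq_norm_sub_rpow {s t c : ℝ} (hs : 0 < s) (ht : 0 < t)
    (hc : (finrank ℝ V / 2 : ℝ) < c) {x y : V} (hxy : x ≠ y) :
    ∫⁻ z : V, ENNReal.ofReal ((s * ‖z - x‖ ^ 2 + t * ‖z - y‖ ^ 2) ^ (-c)) =
      ENNReal.ofReal (π ^ (finrank ℝ V / 2 : ℝ) * Gamma (c - finrank ℝ V / 2) / Gamma c *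
        ((s + t) ^ (-(finrank ℝ V / 2 : ℝ)) *
          (s * t / (s + t) * ‖x - y‖ ^ 2) ^ (finrank ℝ V / 2 - c))) := by
  have hnorm : 0 < ‖x - y‖ := norm_pos_iff.2 (sub_ne_zero.2 hxy)
  simp_rw [mul_sq_norm_sub_add_mul_sq_norm_sub (add_pos hs ht).ne' x y]
  rw [lintegral_sub_right_eq_self (μ := (volume : Measure V)) fun z =>
    ENNReal.ofReal (((s + t) * ‖z‖ ^ 2 + s * t / (s + t) * ‖x - y‖ ^ 2) ^ (-c))]
  exact lintegral_mul_sq_norm_add_rpow (by positivity) (by positivity) hc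

/-- The constant of the Riesz composition formula in dimension `d`: the integral of
`‖z - x‖ ^ (-2a) * ‖z - y‖ ^ (-2b)` over `z` is this constant times `‖x - y‖ ^ (d - 2a - 2b)`.
The parameters are half the decay exponents, so that they are the arguments of `Γ`. -/
noncomputable def rieszCompositionConst (d a b : ℝ) : ℝ :=
  π ^ (d / 2) * (Gamma (d / 2 - a) * Gamma (d / 2 - b) * Gamma (a + b - d / 2)) /
    (Gamma a * Gamma b * Gamma (d - a - b))

lemma rieszCompositionConst_pos {d a b : ℝ} (ha : a < d / 2) (hb : b < d / 2)
    (hab : d / 2 < a + b) : 0 < rieszCompositionConst d a b := by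
  have hΓda := Gamma_pos_of_pos (sub_pos.2 ha)
  have hΓdb := Gamma_pos_of_pos (sub_pos.2 hb)
  have hΓabd := Gamma_pos_of_pos (sub_pos.2 hab)
  have hΓa := Gamma_pos_of_pos (show 0 < a by linarith)
  have hΓb := Gamma_pos_of_pos (show 0 < b by linarith)
  have hΓdab := Gamma_pos_of_pos (show 0 < d - a - b by linarith)
  exact div_pos (mul_pos (rpow_pos_of_pos pi_pos _) (mul_pos (mul_pos hΓda hΓdb) hΓabd))
    (mul_pos (mul_pos hΓa hΓb) hΓdab)

lemma beta_mul_rieszCompositionConst {d a b : ℝ} (ha : 0 < a) (hb : 0 < b) :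
    beta a b * rieszCompositionConst d a b =
      π ^ (d / 2) * Gamma (a + b - d / 2) / Gamma (a + b) * beta (d / 2 - b) (d / 2 - a) := by
  have hΓa := (Gamma_pos_of_pos ha).ne'
  have hΓb := (Gamma_pos_of_pos hb).ne'
  rw [beta, beta, rieszCompositionConst, show d / 2 - b + (d / 2 - a) = d - a - b by ring]
  field_simp

lemma lintegral_beta_mul_rpow_norm_sub_mul_rpow_norm_sub [Nontrivial V] {a b : ℝ} (ha : 0 < a)
    (hb : 0 < b) (x y : V) :
    ∫⁻ z : V, ENNReal.ofReal (beta a b * (‖z - x‖ ^ (-(2 * a)) * ‖z - y‖ ^ (-(2 * b)))) =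
      ∫⁻ w in Ioi (0 : ℝ), ∫⁻ z : V, ENNReal.ofReal
        (w ^ (b - 1) * (‖z - x‖ ^ 2 + w * ‖z - y‖ ^ 2) ^ (-(a + b))) := by
  rw [← lintegral_lintegral_swap (by fun_prop)]
  refine lintegral_congr_ae ?_
  filter_upwards [Measure.ae_ne volume x, Measure.ae_ne volume y] with z hzx hzy
  have hx : 0 < ‖z - x‖ := norm_pos_iff.2 (sub_ne_zero.2 hzx)
  have hy : 0 < ‖z - y‖ := norm_pos_iff.2 (sub_ne_zero.2 hzy)
  have h := lintegral_rpow_mul_add_mul_rpow_Ioi ha hb (pow_pos hx 2) (pow_pos hy 2)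
  simp only [← rpow_natCast_mul (norm_nonneg _), Nat.cast_ofNat, mul_neg] at h
  exact h.symm

lemma lintegral_rpow_mul_sq_norm_sub_add_mul_sq_norm_sub_rpow {a b w : ℝ}
    (hab : (finrank ℝ V / 2 : ℝ) < a + b) {x y : V} (hxy : x ≠ y) (hw : 0 < w) :
    ∫⁻ z : V, ENNReal.ofReal
        (w ^ (b - 1) * (‖z - x‖ ^ 2 + w * ‖z - y‖ ^ 2) ^ (-(a + b))) =
      ENNReal.ofReal (π ^ (finrank ℝ V / 2 : ℝ) * Gamma (a + b - finrank ℝ V / 2) / Gamma (a + b) *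
        ‖x - y‖ ^ (finrank ℝ V - 2 * a - 2 * b) *
        (w ^ ((finrank ℝ V / 2 : ℝ) - a - 1) *
          (1 + w) ^ (-((finrank ℝ V / 2 : ℝ) - b + (finrank ℝ V / 2 - a))))) := by
  have hw1 : 0 < 1 + w := by positivity
  have h := lintegral_mul_sq_norm_sub_add_mul_sq_norm_sub_rpow one_pos hw hab hxy
  set n : ℝ := finrank ℝ V / 2 with hn
  have hexp : (finrank ℝ V : ℝ) - 2 * a - 2 * b = (2 : ℕ) * (n - (a + b)) := by
    rw [hn]
    push_cast
    ring
  simp only [one_mul] at h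
  rw [(lintegral_ofReal_const_mul_eq_iff (rpow_pos_of_pos hw (b - 1))).2 h, hexp,
    mul_rpow (by positivity) (by positivity), div_rpow hw.le hw1.le,
    ← rpow_natCast_mul (norm_nonneg _), show n - a - 1 = b - 1 + (n - (a + b)) by ring,
    rpow_add hw, show -(n - b + (n - a)) = -n - (n - (a + b)) by ring, rpow_sub hw1 (-n)]
  ring_nf

lemma lintegral_rpow_norm_sub_mul_rpow_norm_sub {a b : ℝ} (ha : a < (finrank ℝ V / 2 : ℝ))
    (hb : b < (finrank ℝ V / 2 : ℝ)) (hab : (finrank ℝ V / 2 : ℝ) < a + b) {x y : V}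
    (hxy : x ≠ y) :
    ∫⁻ z : V, ENNReal.ofReal (‖z - x‖ ^ (-(2 * a)) * ‖z - y‖ ^ (-(2 * b))) =
      ENNReal.ofReal (rieszCompositionConst (finrank ℝ V) a b *
        ‖x - y‖ ^ (finrank ℝ V - 2 * a - 2 * b)) := by
  have : Nontrivial V := ⟨x, y, hxy⟩
  have ha0 : 0 < a := by linarith
  have hb0 : 0 < b := by linarith
  have hnorm : 0 < ‖x - y‖ := norm_pos_iff.2 (sub_ne_zero.2 hxy)
  have hconst : 0 < π ^ (finrank ℝ V / 2 : ℝ) * Gamma (a + b - finrank ℝ V / 2) / Gamma (a + b) :=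
    div_pos (mul_pos (rpow_pos_of_pos pi_pos _) (Gamma_pos_of_pos (sub_pos.2 hab)))
      (Gamma_pos_of_pos (add_pos ha0 hb0))
  rw [← lintegral_ofReal_const_mul_eq_iff (beta_pos ha0 hb0),
    lintegral_beta_mul_rpow_norm_sub_mul_rpow_norm_sub ha0 hb0,
    setLIntegral_congr_fun measurableSet_Ioi fun w hw =>
      lintegral_rpow_mul_sq_norm_sub_add_mul_sq_norm_sub_rpow hab hxy hw,
    ← mul_assoc, beta_mul_rieszCompositionConst ha0 hb0, mul_right_comm]
  exact (lintegral_ofReal_const_mul_eq_iff (mul_pos hconst (rpow_pos_of_pos hnorm _))).2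
    (lintegral_rpow_mul_one_add_rpow_Ioi (sub_pos.2 hb) (sub_pos.2 ha))

theorem integrable_and_integral_rpow_norm_sub_mul_rpow_norm_sub {a b : ℝ}
    (ha : a < (finrank ℝ V / 2 : ℝ)) (hb : b < (finrank ℝ V / 2 : ℝ))
    (hab : (finrank ℝ V / 2 : ℝ) < a + b) {x y : V} (hxy : x ≠ y) :
    Integrable (fun z : V => ‖z - x‖ ^ (-(2 * a)) * ‖z - y‖ ^ (-(2 * b))) ∧
    ∫ z : V, ‖z - x‖ ^ (-(2 * a)) * ‖z - y‖ ^ (-(2 * b)) =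
      rieszCompositionConst (finrank ℝ V) a b * ‖x - y‖ ^ (finrank ℝ V - 2 * a - 2 * b) := by
  have hconst := rieszCompositionConst_pos ha hb hab
  exact integrable_and_integral_eq_of_lintegral_ofReal_eq
    (Measurable.aestronglyMeasurable (by fun_prop)) (ae_of_all _ fun z => by positivity)
    (by positivity) (lintegral_rpow_norm_sub_mul_rpow_norm_sub ha hb hab hxy)

lemma rieszCompositionConst_newtonian {d s : ℝ} (hs : 0 < s) (hsd : s < d - 2) :
    Gamma (d / 2 - 1) / (2 * π ^ (d / 2)) * rieszCompositionConst d (d / 2 - 1) ((d - s) / 2) =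
      2 / (d - 2) * (1 / s + 1 / (d - 2 - s)) := by
  have hs2 : 0 < s / 2 := by linarith
  have hds2 : 0 < (d - 2 - s) / 2 := by linarith
  have hrec : Gamma ((d - s) / 2) = (d - 2 - s) / 2 * Gamma ((d - 2 - s) / 2) := by
    rw [← Gamma_add_one hds2.ne']
    ring_nf
  have hΓd := (Gamma_pos_of_pos (show 0 < d / 2 - 1 by linarith)).ne'
  have hΓs := (Gamma_pos_of_pos hs2).ne'
  have hΓds := (Gamma_pos_of_pos hds2).ne'
  have hd : d - 2 ≠ 0 := by linarith
  have hds : d - 2 - s ≠ 0 := by linarith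
  rw [rieszCompositionConst, hrec, show d / 2 - (d / 2 - 1) = 1 by ring, Gamma_one,
    show d / 2 - (d - s) / 2 = s / 2 by ring,
    show d / 2 - 1 + (d - s) / 2 - d / 2 = (d - 2 - s) / 2 by ring,
    show d - (d / 2 - 1) - (d - s) / 2 = s / 2 + 1 by ring, Gamma_add_one hs2.ne']
  generalize Gamma (d / 2 - 1) = Γd at hΓd
  field_simp
  ring

theorem integral_newtonian_kernel_rpow_dim9_general {e : V} (he : e ≠ 0) {s : ℝ} (hs : 0 < s)
    (hsd : s < finrank ℝ V - 2) :
    Integrable (fun z : V => ‖z - e‖ ^ (2 - finrank ℝ V : ℝ) * ‖z‖ ^ (s - finrank ℝ V)) ∧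
    Gamma (finrank ℝ V / 2 - 1) / (2 * π ^ (finrank ℝ V / 2 : ℝ)) *
        ∫ z : V, ‖z - e‖ ^ (2 - finrank ℝ V : ℝ) * ‖z‖ ^ (s - finrank ℝ V) =
      2 / (finrank ℝ V - 2) * (1 / s + 1 / (finrank ℝ V - 2 - s)) *
        ‖e‖ ^ (s + 2 - finrank ℝ V) := by
  set d : ℝ := ↑(finrank ℝ V)
  obtain ⟨hint, hval⟩ := integrable_and_integral_rpow_norm_sub_mul_rpow_norm_sub (V := V)
    (a := d / 2 - 1) (b := (d - s) / 2) (by linarith) (by linarith) (by linarith) he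
  rw [sub_zero, show d - 2 * (d / 2 - 1) - 2 * ((d - s) / 2) = s + 2 - d by ring] at hval
  simp only [sub_zero, show -(2 * (d / 2 - 1)) = 2 - d by ring,
    show -(2 * ((d - s) / 2)) = s - d by ring] at hint hval
  exact ⟨hint, by rw [hval, ← mul_assoc, rieszCompositionConst_newtonian hs hsd]⟩

end

/-- For a unit vector `e` of `ℝ⁹` and `0 ≤ p < 6`, the function
`z ↦ ‖z − e‖⁻⁷ ‖z‖^{p−8}` is Lebesgue-integrable on `ℝ⁹` and
`(3 Γ(7/2) / (2 π^{9/2})) ∫ ‖z − e‖⁻⁷ ‖z‖^{p−8} dz = (6/7)(1/(p+1) + 1/(6−p))`. -/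
theorem integral_newtonian_kernel_rpow_dim9
    (e : EuclideanSpace ℝ (Fin 9)) (he : ‖e‖ = 1)
    (p : ℝ) (hp0 : 0 ≤ p) (hp6 : p < 6) :
    Integrable (fun z : EuclideanSpace ℝ (Fin 9) =>
      ‖z - e‖ ^ (-(7 : ℝ)) * ‖z‖ ^ (p - 8)) ∧
    (3 * Real.Gamma (7 / 2) / (2 * Real.pi ^ ((9 : ℝ) / 2))) *
        (∫ z : EuclideanSpace ℝ (Fin 9), ‖z - e‖ ^ (-(7 : ℝ)) * ‖z‖ ^ (p - 8)) =
      (6 / 7) * (1 / (p + 1) + 1 / (6 - p)) := by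
  have hdim : (Module.finrank ℝ (EuclideanSpace ℝ (Fin 9)) : ℝ) = 9 := by simp
  obtain ⟨hint, hval⟩ := integral_newtonian_kernel_rpow_dim9_general (e := e) (s := p + 1)
    (norm_ne_zero_iff.1 (by rw [he]; exact one_ne_zero)) (by linarith) (by rw [hdim]; linarith)
  simp only [hdim, show (2 - 9 : ℝ) = -7 by norm_num, show p + 1 - 9 = p - 8 by ring] at hint hval
  rw [he, Real.one_rpow, show (9 / 2 - 1 : ℝ) = 7 / 2 by norm_num,
    show 9 - 2 - (p + 1) = 6 - p by ring] at hval
  exact ⟨hint, by linear_combination 3 * hval⟩
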